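/- (Deviation bound, off-diagonal case.) There is an absolute constant C > 0 with the following property: for all integers θ > 0 and θ₀ with 0 < θ₀ ≤ √d, all dimensions d with d > √6·(2θ₀)^{7/4}, every CPTP map Φ on M_d(ℂ) given with a Kraus representation of r operators, all s, t ∈ {1,…,d} with s ≠ t, and every ε > 0, μ{ U ∈ U(d) : X_{st}(U) ≥ ε } ≤ C · e^{−θ·ε} · ( exp( r·θ·θ₀·(d + θ₀)/d² ) + e^{θ} · ( r·θ₀·(d + θ₀)/d² )^{θ₀} ). -/

import Mathlib

open MeasureTheory Matrix

noncomputable section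

instance matrixMeasurableSpace {m n α : Type*} [MeasurableSpace α] :
    MeasurableSpace (Matrix m n α) :=
  inferInstanceAs (MeasurableSpace (m → n → α))

/-- `X_{st}(U) = ∑_i |⟨e_t, U* K_i U e_s⟩|²`. -/
def Xst {d r : ℕ} (K : Fin r → Matrix (Fin d) (Fin d) ℂ) (s t : Fin d)
    (U : Matrix.unitaryGroup (Fin d) ℂ) : ℝ :=
  ∑ i, ‖(star (U : Matrix (Fin d) (Fin d) ℂ) * K i * (U : Matrix (Fin d) (Fin d) ℂ)) t s‖ ^ 2

/-! By Chernoff's bound it suffices to control the exponential moment of `X = X_{st}`. Since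
`0 ≤ X ≤ 1`, the powers of `X` beyond the `m`-th are at most `X ^ m`, and the lower ones satisfy
`X ^ n ≤ a ^ n * (1 + (X / a) ^ m)` for every `a > 0`, so the `m`-th moment alone controls the
exponential series.

By invariance of `μ`, `U` may be replaced by `U * W_ε`, where `W_ε` is a unitary that fixes `e_s`
and sends `e_t` to the unit vector with coordinates `ε_j / √(d - 1)`, `j ≠ s`. For fixed `U`,
averaging over the signs `ε` turns `(d - 1) X` into the squared norm of a Rademacher sum
`∑ j, ε_j c_j` in `ℂ^r`, and `∑ j, ‖c_j‖ ^ 2 ≤ 1` because `∑ i, K_iᴴ K_i = 1`. Khintchine's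
inequality then yields `E (X ^ m) ≤ (2m - 1)‼ / (d - 1) ^ m`.

For Khintchine's inequality, write `‖S‖ ^ (n + 2) = ∑ j, ⟨ε_j c_j, ‖S‖ ^ n S⟩` and average each
summand with the one where `ε_j` is flipped: a two-point inequality for `v ↦ ‖v‖ ^ n v` bounds the
`(n + 2)`-nd moment of `‖S‖` by `(n + 1) ∑ j, ‖c_j‖ ^ 2` times the `n`-th.
-/

section Khintchine

open scoped BigOperators InnerProductSpace Nat

section Power

variable {R : Type*} [Field R] [LinearOrder R] [IsStrictOrderedRing R]

lemma pow_sub_pow_mul_add_le {p q : R} (hq : 0 ≤ q) (hqp : q ≤ p) (n : ℕ) :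
    (p ^ n - q ^ n) * (p + q) ≤ n * (p ^ n + q ^ n) * (p - q) := by
  induction n with
  | zero => simp
  | succ n ih =>
    have hchebyshev : 0 ≤ (p ^ n - q ^ n) * (p - q) :=
      mul_nonneg (sub_nonneg.2 (pow_le_pow_left₀ hq hqp n)) (sub_nonneg.2 hqp)
    have hih := mul_le_mul_of_nonneg_left ih (add_nonneg (hq.trans hqp) hq)
    have hmean := mul_le_mul_of_nonneg_left hchebyshev
      (mul_nonneg (by positivity : (0 : R) ≤ n + 1) (sub_nonneg.2 hqp))
    push_cast
    linear_combination (hih + hmean) / 2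

lemma pow_sub_pow_mul_sq_sub_sq_le {p q : R} (hp : 0 ≤ p) (hq : 0 ≤ q) (n : ℕ) :
    (p ^ n - q ^ n) * (p ^ 2 - q ^ 2) ≤ n * (p ^ n + q ^ n) * (p - q) ^ 2 := by
  wlog hqp : q ≤ p generalizing p q
  · linear_combination this hq hp (le_of_not_ge hqp)
  · linear_combination mul_le_mul_of_nonneg_right (pow_sub_pow_mul_add_le hq hqp n)
      (sub_nonneg.2 hqp)

end Power

section InnerProduct

variable {E : Type*} [NormedAddCommGroup E] [InnerProductSpace ℝ E]

lemma inner_sub_norm_pow_smul_sub_le (u v : E) (n : ℕ) :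
    ⟪u - v, ‖u‖ ^ n • u - ‖v‖ ^ n • v⟫_ℝ ≤
      (n + 1) / 2 * ‖u - v‖ ^ 2 * (‖u‖ ^ n + ‖v‖ ^ n) := by
  have hsplit : ⟪u - v, ‖u‖ ^ n • u - ‖v‖ ^ n • v⟫_ℝ =
      ((‖u‖ ^ n + ‖v‖ ^ n) * ‖u - v‖ ^ 2 + (‖u‖ ^ n - ‖v‖ ^ n) * (‖u‖ ^ 2 - ‖v‖ ^ 2)) / 2 := by
    rw [norm_sub_sq_real]
    simp only [inner_sub_left, inner_sub_right, inner_smul_right, real_inner_self_eq_norm_sq,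
      real_inner_comm u v]
    ring
  have hnorm : (‖u‖ - ‖v‖) ^ 2 ≤ ‖u - v‖ ^ 2 :=
    sq_le_sq.2 ((abs_norm_sub_norm_le u v).trans (le_abs_self _))
  have hpow := pow_sub_pow_mul_sq_sub_sq_le (norm_nonneg u) (norm_nonneg v) n
  have hmul := mul_le_mul_of_nonneg_left hnorm
    (by positivity : 0 ≤ n * (‖u‖ ^ n + ‖v‖ ^ n))
  rw [hsplit]
  linear_combination (hpow + hmul) / 2

end InnerProduct

/-- The sum `∑ⱼ εⱼ cⱼ` of the vectors `cⱼ` with signs `εⱼ = ±1`. It becomes a Rademacher sum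
when `ε` is averaged over the finite group `ι → ℤˣ`. -/
def rademacherSum {ι E : Type*} [Fintype ι] [AddCommGroup E] (c : ι → E) (ε : ι → ℤˣ) : E :=
  ∑ j, ε j • c j

variable {ι E : Type*} [Fintype ι] [DecidableEq ι]

lemma rademacherSum_mulSingle_neg_one_mul [AddCommGroup E] (c : ι → E) (j : ι) (ε : ι → ℤˣ) :
    rademacherSum c (Pi.mulSingle j (-1) * ε) = rademacherSum c ε - 2 • ε j • c j := by
  have hsub : rademacherSum c ε - rademacherSum c (Pi.mulSingle j (-1) * ε) =
      ∑ i, if i = j then 2 • ε j • c j else 0 := by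
    rw [rademacherSum, rademacherSum, ← Finset.sum_sub_distrib]
    refine Finset.sum_congr rfl fun i _ ↦ ?_
    by_cases hij : i = j
    · subst hij
      simp [two_smul]
    · simp [hij]
  rw [Finset.sum_ite_eq' Finset.univ j, if_pos (Finset.mem_univ j)] at hsub
  rw [← hsub, sub_sub_cancel]

lemma expect_mul_left_eq_self {G M : Type*} [Group G] [Fintype G] [AddCommMonoid M]
    [Module ℚ≥0 M] (F : G → M) (g : G) : 𝔼 x, F (g * x) = 𝔼 x, F x :=
  Fintype.expect_equiv (Equiv.mulLeft g) _ _ fun _ ↦ rfl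

variable [NormedAddCommGroup E] [InnerProductSpace ℝ E]

-- Pairing `ε` with its flip in the `j`-th sign turns this into the two-point inequality above.
lemma expect_inner_norm_pow_smul_rademacherSum_le (c : ι → E) (j : ι) (n : ℕ) :
    𝔼 ε, ⟪ε j • c j, ‖rademacherSum c ε‖ ^ n • rademacherSum c ε⟫_ℝ ≤
      (n + 1) * ‖c j‖ ^ 2 * 𝔼 ε, ‖rademacherSum c ε‖ ^ n := by
  set S := rademacherSum c
  set flipSign : (ι → ℤˣ) → ι → ℤˣ := fun ε ↦ Pi.mulSingle j (-1) * ε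
  set F : (ι → ℤˣ) → ℝ := fun ε ↦ ⟪ε j • c j, ‖S ε‖ ^ n • S ε⟫_ℝ
  have hpair (ε : ι → ℤˣ) :
      F ε + F (flipSign ε) ≤ (n + 1) * ‖c j‖ ^ 2 * (‖S ε‖ ^ n + ‖S (flipSign ε)‖ ^ n) := by
    have hdiff : S ε - S (flipSign ε) = (2 : ℝ) • ε j • c j := by
      simp only [S, flipSign]
      rw [rademacherSum_mulSingle_neg_one_mul, sub_sub_cancel, ofNat_smul_eq_nsmul ℝ]
    have hflip : F (flipSign ε) = -⟪ε j • c j, ‖S (flipSign ε)‖ ^ n • S (flipSign ε)⟫_ℝ := by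
      simp [F, flipSign, inner_neg_left]
    have h := inner_sub_norm_pow_smul_sub_le (S ε) (S (flipSign ε)) n
    rw [hdiff, inner_smul_left, inner_sub_right, norm_smul, norm_units_zsmul] at h
    simp only [conj_trivial, Real.norm_ofNat] at h
    rw [hflip]
    linear_combination h / 2
  have hsum := Finset.expect_le_expect (s := Finset.univ) fun ε _ ↦ hpair ε
  rw [← Finset.mul_expect, Finset.expect_add_distrib, Finset.expect_add_distrib,
    expect_mul_left_eq_self F, expect_mul_left_eq_self fun ε ↦ ‖S ε‖ ^ n] at hsum
  linarith

lemma expect_norm_rademacherSum_pow_add_two_le (c : ι → E) (n : ℕ) :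
    𝔼 ε, ‖rademacherSum c ε‖ ^ (n + 2) ≤
      (n + 1) * (∑ j, ‖c j‖ ^ 2) * 𝔼 ε, ‖rademacherSum c ε‖ ^ n := by
  calc 𝔼 ε, ‖rademacherSum c ε‖ ^ (n + 2)
      = 𝔼 ε, ∑ j, ⟪ε j • c j, ‖rademacherSum c ε‖ ^ n • rademacherSum c ε⟫_ℝ := by
        refine Finset.expect_congr rfl fun ε _ ↦ ?_
        rw [← sum_inner, ← rademacherSum, inner_smul_right, real_inner_self_eq_norm_sq, pow_add]
    _ = ∑ j, 𝔼 ε, ⟪ε j • c j, ‖rademacherSum c ε‖ ^ n • rademacherSum c ε⟫_ℝ :=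
        Finset.expect_sum_comm _ _ _
    _ ≤ ∑ j, (n + 1) * ‖c j‖ ^ 2 * 𝔼 ε, ‖rademacherSum c ε‖ ^ n :=
        Finset.sum_le_sum fun j _ ↦ expect_inner_norm_pow_smul_rademacherSum_le c j n
    _ = (n + 1) * (∑ j, ‖c j‖ ^ 2) * 𝔼 ε, ‖rademacherSum c ε‖ ^ n := by
        rw [← Finset.sum_mul, ← Finset.mul_sum]

lemma expect_norm_rademacherSum_pow_le (c : ι → E) (m : ℕ) :
    𝔼 ε, ‖rademacherSum c ε‖ ^ (2 * m) ≤ (2 * m - 1)‼ * (∑ j, ‖c j‖ ^ 2) ^ m := by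
  induction m with
  | zero => simp
  | succ m ih =>
    calc 𝔼 ε, ‖rademacherSum c ε‖ ^ (2 * (m + 1))
        ≤ ((2 * m : ℕ) + 1) * (∑ j, ‖c j‖ ^ 2) * 𝔼 ε, ‖rademacherSum c ε‖ ^ (2 * m) :=
          expect_norm_rademacherSum_pow_add_two_le c (2 * m)
      _ ≤ ((2 * m : ℕ) + 1) * (∑ j, ‖c j‖ ^ 2) * ((2 * m - 1)‼ * (∑ j, ‖c j‖ ^ 2) ^ m) := by
          gcongr
      _ = (2 * (m + 1) - 1)‼ * (∑ j, ‖c j‖ ^ 2) ^ (m + 1) := by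
          rw [show 2 * (m + 1) - 1 = 2 * m + 1 by lia, Nat.doubleFactorial_add_one]
          push_cast
          ring

lemma doubleFactorial_two_mul_sub_one_le_pow (m : ℕ) : (2 * m - 1)‼ ≤ m ^ m := by
  cases m with
  | zero => simp
  | succ k =>
    have hfactorial : (2 * (k + 1))! = (2 ^ (k + 1) * (k + 1)!) * (2 * (k + 1) - 1)‼ := by
      rw [← Nat.doubleFactorial_two_mul]
      exact Nat.factorial_eq_mul_doubleFactorial (2 * k + 1)
    refine Nat.le_of_mul_le_mul_left ?_
      (Nat.mul_pos (Nat.two_pow_pos (k + 1)) (k + 1).factorial_pos)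
    calc 2 ^ (k + 1) * (k + 1)! * (2 * (k + 1) - 1)‼ = (2 * (k + 1))! := hfactorial.symm
      _ ≤ (2 * (k + 1)) ^ (k + 1) * (k + 1)! := Nat.factorial_two_mul_le (k + 1)
      _ = 2 ^ (k + 1) * (k + 1)! * (k + 1) ^ (k + 1) := by
        rw [mul_pow]
        ring

end Khintchine

section Probability

open ProbabilityTheory

lemma exp_mul_le_of_mem_Icc {x a θ : ℝ} (hx : x ∈ Set.Icc 0 1) (ha : 0 < a) (hθ : 0 ≤ θ)
    (m : ℕ) :
    Real.exp (θ * x) ≤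
      Real.exp (θ * a) + (Real.exp (θ * a) + Real.exp θ * a ^ m) * (x / a) ^ m := by
  obtain ⟨hx0, hx1⟩ := hx
  have hexp (y : ℝ) : HasSum (fun n : ℕ ↦ y ^ n / n.factorial) (Real.exp y) := by
    rw [Real.exp_eq_exp_ℝ]
    exact NormedSpace.expSeries_div_hasSum_exp y
  have hpow (n : ℕ) : x ^ n ≤ a ^ n * (1 + (x / a) ^ m) + x ^ m := by
    rcases le_total m n with hmn | hnm
    · exact (pow_le_pow_of_le_one hx0 hx1 hmn).trans (le_add_of_nonneg_left (by positivity))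
    · have hratio : (x / a) ^ n ≤ 1 + (x / a) ^ m := by
        rcases le_total (x / a) 1 with h1 | h1
        · exact (pow_le_one₀ (by positivity) h1).trans (le_add_of_nonneg_right (by positivity))
        · exact (pow_le_pow_right₀ h1 hnm).trans (le_add_of_nonneg_left zero_le_one)
      calc x ^ n = a ^ n * (x / a) ^ n := by rw [← mul_pow, mul_div_cancel₀ _ ha.ne']
        _ ≤ a ^ n * (1 + (x / a) ^ m) := by gcongr
        _ ≤ a ^ n * (1 + (x / a) ^ m) + x ^ m := le_add_of_nonneg_right (by positivity)
  calc Real.exp (θ * x) ≤ Real.exp (θ * a) * (1 + (x / a) ^ m) + Real.exp θ * x ^ m := by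
        refine hasSum_le (fun n ↦ ?_) (hexp (θ * x))
          (((hexp (θ * a)).mul_right (1 + (x / a) ^ m)).add ((hexp θ).mul_right (x ^ m)))
        calc (θ * x) ^ n / n.factorial = θ ^ n / n.factorial * x ^ n := by ring
          _ ≤ θ ^ n / n.factorial * (a ^ n * (1 + (x / a) ^ m) + x ^ m) := by
            gcongr
            exact hpow n
          _ = _ := by ring
    _ = Real.exp (θ * a) + (Real.exp (θ * a) + Real.exp θ * a ^ m) * (x / a) ^ m := by
        rw [div_pow]
        field_simp
        ring

variable {Ω : Type*} [MeasurableSpace Ω] {μ : Measure Ω} [IsProbabilityMeasure μ] {X : Ω → ℝ}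

lemma integrable_pow_of_mem_Icc_zero_one (hX : AEMeasurable X μ)
    (hX01 : ∀ᵐ ω ∂μ, X ω ∈ Set.Icc 0 1) (m : ℕ) : Integrable (fun ω ↦ X ω ^ m) μ :=
  .of_mem_Icc 0 1 (hX.pow_const m) <| hX01.mono fun _ h ↦
    ⟨pow_nonneg h.1 m, pow_le_one₀ h.1 h.2⟩

lemma mgf_le_of_integral_pow_le (hX : AEMeasurable X μ) (hX01 : ∀ᵐ ω ∂μ, X ω ∈ Set.Icc 0 1)
    {a θ C : ℝ} (ha : 0 < a) (hθ : 0 ≤ θ) {m : ℕ} (hmoment : ∫ ω, X ω ^ m ∂μ ≤ C * a ^ m) :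
    mgf X μ θ ≤ (1 + C) * (Real.exp (θ * a) + Real.exp θ * a ^ m) := by
  set A := Real.exp (θ * a) + Real.exp θ * a ^ m
  have hint : Integrable (fun ω ↦ A * (X ω / a) ^ m) μ := by
    simp_rw [div_pow]
    exact ((integrable_pow_of_mem_Icc_zero_one hX hX01 m).div_const _).const_mul _
  calc mgf X μ θ ≤ ∫ ω, (Real.exp (θ * a) + A * (X ω / a) ^ m) ∂μ :=
        integral_mono_ae (integrable_exp_mul_of_mem_Icc hX hX01) ((integrable_const _).add hint)
          (hX01.mono fun ω hω ↦ exp_mul_le_of_mem_Icc hω ha hθ m)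
    _ = Real.exp (θ * a) + A * ((∫ ω, X ω ^ m ∂μ) / a ^ m) := by
        rw [integral_add (integrable_const _) hint, integral_const_mul]
        simp only [div_pow, integral_div, integral_const, probReal_univ, one_smul]
    _ ≤ A + A * C := by
        gcongr
        · exact le_add_of_nonneg_right (by positivity)
        · exact (div_le_iff₀ (by positivity)).2 hmoment
    _ = (1 + C) * A := by ring

lemma measureReal_ge_le_of_integral_pow_le (hX : AEMeasurable X μ)
    (hX01 : ∀ᵐ ω ∂μ, X ω ∈ Set.Icc 0 1) {a θ C : ℝ} (ha : 0 < a) (hθ : 0 ≤ θ) {m : ℕ}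
    (hmoment : ∫ ω, X ω ^ m ∂μ ≤ C * a ^ m) (ε : ℝ) :
    μ.real {ω | ε ≤ X ω} ≤
      (1 + C) * Real.exp (-θ * ε) * (Real.exp (θ * a) + Real.exp θ * a ^ m) := by
  calc μ.real {ω | ε ≤ X ω} ≤ Real.exp (-θ * ε) * mgf X μ θ :=
        measure_ge_le_exp_mul_mgf ε hθ (integrable_exp_mul_of_mem_Icc hX hX01)
    _ ≤ Real.exp (-θ * ε) * ((1 + C) * (Real.exp (θ * a) + Real.exp θ * a ^ m)) := by
        gcongr
        exact mgf_le_of_integral_pow_le hX hX01 ha hθ hmoment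
    _ = _ := by ring

end Probability

section InvariantMeasure

open scoped BigOperators

variable {G : Type*} [Group G] [MeasurableSpace G]

lemma isMulRightInvariant_of_isMulLeftInvariant [MeasurableMul₂ G] [MeasurableInv G]
    (μ : Measure G) [IsProbabilityMeasure μ] [μ.IsMulLeftInvariant] :
    μ.IsMulRightInvariant := by
  have : IsProbabilityMeasure μ.inv := ⟨by simp [Measure.inv_apply]⟩
  have hinv : μ = μ.inv := by
    refine Measure.ext_of_lintegral _ fun f hf ↦ ?_
    calc ∫⁻ x, f x ∂μ = ∫⁻ y, ∫⁻ x, f (y * x) ∂μ ∂μ.inv := by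
          simp [lintegral_mul_left_eq_self]
      _ = ∫⁻ x, ∫⁻ y, f (y * x) ∂μ.inv ∂μ :=
          lintegral_lintegral_swap (hf.comp measurable_mul).aemeasurable
      _ = ∫⁻ x, f x ∂μ.inv := by simp [lintegral_mul_right_eq_self]
  rw [hinv]
  infer_instance

lemma integral_le_of_expect_mul_right_le [MeasurableMul G] {μ : Measure G}
    [IsProbabilityMeasure μ] [μ.IsMulRightInvariant] {κ : Type*} [Fintype κ] [Nonempty κ]
    {f : G → ℝ} (hf : Integrable f μ) (g : κ → G) {b : ℝ}
    (hb : ∀ x, 𝔼 k, f (x * g k) ≤ b) : ∫ x, f x ∂μ ≤ b := by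
  have htranslate (k : κ) : Integrable (fun x ↦ f (x * g k)) μ := hf.comp_mul_right (g k)
  calc ∫ x, f x ∂μ = 𝔼 k, ∫ x, f (x * g k) ∂μ := by
        simp only [integral_mul_right_eq_self, Fintype.expect_const]
    _ = ∫ x, 𝔼 k, f (x * g k) ∂μ := by
        simp only [Fintype.expect_eq_sum_div_card]
        rw [integral_div, integral_finsetSum _ fun k _ ↦ htranslate k]
    _ ≤ ∫ _, b ∂μ := by
        refine integral_mono ?_ (integrable_const b) hb
        simp only [Fintype.expect_eq_sum_div_card]
        exact (integrable_finsetSum _ fun k _ ↦ htranslate k).div_const _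
    _ = b := by simp

end InvariantMeasure

section UnitaryGroup

instance matrixBorelSpace {m n α : Type*} [Countable m] [Countable n] [TopologicalSpace α]
    [MeasurableSpace α] [SecondCountableTopology α] [BorelSpace α] : BorelSpace (Matrix m n α) :=
  inferInstanceAs (BorelSpace (m → n → α))

instance matrixSecondCountableTopology {m n α : Type*} [Countable m] [Countable n]
    [TopologicalSpace α] [SecondCountableTopology α] : SecondCountableTopology (Matrix m n α) :=
  inferInstanceAs (SecondCountableTopology (m → n → α))

variable {n 𝕜 : Type*} [Fintype n] [DecidableEq n] [RCLike 𝕜]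

instance unitaryGroupSecondCountableTopology : SecondCountableTopology (unitaryGroup n 𝕜) :=
  TopologicalSpace.Subtype.secondCountableTopology _

lemma exists_unitaryGroup_col_eq {v : n → EuclideanSpace 𝕜 n} {S : Set n}
    (hv : Orthonormal 𝕜 (S.domRestrict v)) :
    ∃ W : unitaryGroup n 𝕜, ∀ i ∈ S, ∀ j, W.1 j i = v i j := by
  obtain ⟨b, hb⟩ := hv.exists_orthonormalBasis_extension_of_card_eq (by simp)
  refine ⟨⟨_, (EuclideanSpace.basisFun n 𝕜).toMatrix_orthonormalBasis_mem_unitary b⟩, ?_⟩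
  intro i hi j
  simp [Module.Basis.toMatrix_apply, hb i hi]

lemma exists_unitaryGroup_col_pair_eq {s t : n} (hst : s ≠ t) {x y : EuclideanSpace 𝕜 n}
    (hx : ‖x‖ = 1) (hy : ‖y‖ = 1) (hxy : inner 𝕜 x y = 0) :
    ∃ W : unitaryGroup n 𝕜, (∀ j, W.1 j s = x j) ∧ ∀ j, W.1 j t = y j := by
  set v : n → EuclideanSpace 𝕜 n := Function.update (fun _ ↦ y) s x
  have hvs : v s = x := Function.update_self ..
  have hvt : v t = y := Function.update_of_ne hst.symm ..
  have hv : Orthonormal 𝕜 (({s, t} : Set n).domRestrict v) := by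
    constructor
    · rintro ⟨i, rfl | rfl⟩ <;> simp [hvs, hvt, hx, hy]
    · rintro ⟨i, rfl | rfl⟩ ⟨j, rfl | rfl⟩ hij <;>
        simp_all [inner_eq_zero_symm.1 hxy]
  obtain ⟨W, hW⟩ := exists_unitaryGroup_col_eq hv
  exact ⟨W, fun j ↦ by rw [hW s (by simp), hvs], fun j ↦ by rw [hW t (by simp), hvt]⟩

end UnitaryGroup

section Kraus

variable {d r : ℕ} {K : Fin r → Matrix (Fin d) (Fin d) ℂ}

/-- The Kraus family `(U* Kᵢ U)ᵢ` of the channel `Φ` conjugated by `U`. -/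
def conjKraus (U : unitaryGroup (Fin d) ℂ) (K : Fin r → Matrix (Fin d) (Fin d) ℂ) :
    Fin r → Matrix (Fin d) (Fin d) ℂ :=
  fun i ↦ star U.1 * K i * U.1

/-- The vector `(⟨eⱼ, Kᵢ eₛ⟩)ᵢ` of transition amplitudes from `s` to `j`; its squared norm is the
transition probability `⟨eⱼ, Φ(eₛ eₛ*) eⱼ⟩`. -/
def krausAmplitude (K : Fin r → Matrix (Fin d) (Fin d) ℂ) (s j : Fin d) :
    EuclideanSpace ℂ (Fin r) :=
  WithLp.toLp 2 fun i ↦ K i j s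

lemma Xst_eq_norm_krausAmplitude_sq (K : Fin r → Matrix (Fin d) (Fin d) ℂ) (s t : Fin d)
    (U : unitaryGroup (Fin d) ℂ) : Xst K s t U = ‖krausAmplitude (conjKraus U K) s t‖ ^ 2 := by
  rw [EuclideanSpace.norm_sq_eq]
  rfl

lemma conjKraus_mul (U W : unitaryGroup (Fin d) ℂ) (K : Fin r → Matrix (Fin d) (Fin d) ℂ) :
    conjKraus (U * W) K = conjKraus W (conjKraus U K) := by
  funext i
  simp only [conjKraus, Submonoid.coe_mul, star_mul, Matrix.mul_assoc]

lemma sum_conjTranspose_mul_self_conjKraus (hK : ∑ i, (K i)ᴴ * K i = 1)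
    (U : unitaryGroup (Fin d) ℂ) : ∑ i, (conjKraus U K i)ᴴ * conjKraus U K i = 1 := by
  have hterm (i : Fin r) :
      (conjKraus U K i)ᴴ * conjKraus U K i = star U.1 * ((K i)ᴴ * K i) * U.1 := by
    calc (conjKraus U K i)ᴴ * conjKraus U K i
        = star U.1 * (K i)ᴴ * (U.1 * star U.1) * K i * U.1 := by
          simp only [conjKraus, conjTranspose_mul, star_eq_conjTranspose,
            conjTranspose_conjTranspose, Matrix.mul_assoc]
      _ = star U.1 * ((K i)ᴴ * K i) * U.1 := by
          rw [mem_unitaryGroup_iff.1 U.2, Matrix.mul_one]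
          simp only [Matrix.mul_assoc]
  rw [Finset.sum_congr rfl fun i _ ↦ hterm i, ← Matrix.sum_mul, ← Matrix.mul_sum, hK,
    Matrix.mul_one, mem_unitaryGroup_iff'.1 U.2]

lemma sum_norm_krausAmplitude_sq (hK : ∑ i, (K i)ᴴ * K i = 1) (s : Fin d) :
    ∑ j, ‖krausAmplitude K s j‖ ^ 2 = 1 := by
  have hdiag := congrArg (fun M : Matrix (Fin d) (Fin d) ℂ ↦ M s s) hK
  simp only [Matrix.sum_apply, mul_apply, conjTranspose_apply, one_apply_eq] at hdiag
  simp only [EuclideanSpace.norm_sq_eq, krausAmplitude]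
  rw [← Complex.ofReal_inj]
  push_cast
  simpa only [Complex.star_def, Complex.conj_mul'] using Finset.sum_comm.trans hdiag

lemma sum_Xst (hK : ∑ i, (K i)ᴴ * K i = 1) (s : Fin d) (U : unitaryGroup (Fin d) ℂ) :
    ∑ j, Xst K s j U = 1 := by
  simp only [Xst_eq_norm_krausAmplitude_sq]
  exact sum_norm_krausAmplitude_sq (sum_conjTranspose_mul_self_conjKraus hK U) s

lemma Xst_mem_Icc (hK : ∑ i, (K i)ᴴ * K i = 1) (s t : Fin d) (U : unitaryGroup (Fin d) ℂ) :
    Xst K s t U ∈ Set.Icc 0 1 := by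
  have hnonneg (j : Fin d) : 0 ≤ Xst K s j U := Finset.sum_nonneg fun _ _ ↦ sq_nonneg _
  refine ⟨hnonneg t, ?_⟩
  rw [← sum_Xst hK s U]
  exact Finset.single_le_sum (fun j _ ↦ hnonneg j) (Finset.mem_univ t)

lemma continuous_Xst (K : Fin r → Matrix (Fin d) (Fin d) ℂ) (s t : Fin d) :
    Continuous (Xst K s t) := by
  have hcoe : Continuous fun U : unitaryGroup (Fin d) ℂ ↦ U.1 := continuous_subtype_val
  exact continuous_finsetSum _ fun i _ ↦
    (((hcoe.star.matrix_mul continuous_const).matrix_mul hcoe).matrix_elem t s).norm.pow 2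

lemma krausAmplitude_conjKraus_of_col_eq_single (K : Fin r → Matrix (Fin d) (Fin d) ℂ)
    {s : Fin d} {W : unitaryGroup (Fin d) ℂ}
    (hW : ∀ j, W.1 j s = EuclideanSpace.single s (1 : ℂ) j) (t : Fin d) :
    krausAmplitude (conjKraus W K) s t = ∑ j, star (W.1 j t) • krausAmplitude K s j := by
  ext i
  simp [krausAmplitude, conjKraus, mul_apply, hW]

end Kraus

section Symmetrization

open scoped BigOperators Nat

variable {d r : ℕ} {K : Fin r → Matrix (Fin d) (Fin d) ℂ} {s t : Fin d}

/-- The vector with coordinates `εⱼ / √(d - 1)` for `j ≠ s` and `0` at `s`: a unit vector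
orthogonal to `eₛ`. -/
def signVector (s : Fin d) (ε : Fin d → ℤˣ) : EuclideanSpace ℂ (Fin d) :=
  WithLp.toLp 2 fun j ↦ if j = s then 0 else (√(d - 1))⁻¹ • ε j • 1

lemma norm_signVector (hd : 2 ≤ d) (s : Fin d) (ε : Fin d → ℤˣ) : ‖signVector s ε‖ = 1 := by
  have hd1 : (0 : ℝ) < d - 1 := sub_pos.2 (by exact_mod_cast hd)
  have hcoord (j : Fin d) : ‖signVector s ε j‖ ^ 2 =
      (d - 1 : ℝ)⁻¹ - if j = s then (d - 1 : ℝ)⁻¹ else 0 := by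
    by_cases hj : j = s
    · simp [signVector, hj]
    · simp [signVector, hj, norm_units_zsmul, Real.sq_sqrt hd1.le]
  rw [← sq_eq_sq₀ (norm_nonneg _) zero_le_one, EuclideanSpace.norm_sq_eq]
  simp only [hcoord, Finset.sum_sub_distrib, Finset.sum_ite_eq', Finset.mem_univ, if_true,
    Finset.sum_const, Finset.card_univ, Fintype.card_fin, nsmul_eq_mul]
  field_simp

lemma exists_unitaryGroup_col_signVector (hst : s ≠ t) (ε : Fin d → ℤˣ) :
    ∃ W : unitaryGroup (Fin d) ℂ,
      (∀ j, W.1 j s = EuclideanSpace.single s (1 : ℂ) j) ∧ ∀ j, W.1 j t = signVector s ε j :=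
  exists_unitaryGroup_col_pair_eq hst (by simp)
    (norm_signVector (Fin.nontrivial_iff_two_le.1 ⟨s, t, hst⟩) s ε)
    (by simp [EuclideanSpace.inner_single_left, signVector])

lemma krausAmplitude_conjKraus_of_col_eq_signVector {ε : Fin d → ℤˣ}
    {W : unitaryGroup (Fin d) ℂ} (hWs : ∀ j, W.1 j s = EuclideanSpace.single s (1 : ℂ) j)
    (hWt : ∀ j, W.1 j t = signVector s ε j) :
    krausAmplitude (conjKraus W K) s t =
      (√(d - 1))⁻¹ • rademacherSum (Function.update (krausAmplitude K s) s 0) ε := by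
  rw [krausAmplitude_conjKraus_of_col_eq_single K hWs, rademacherSum, Finset.smul_sum]
  refine Finset.sum_congr rfl fun j _ ↦ ?_
  rw [hWt]
  by_cases hj : j = s
  · subst hj
    simp [signVector]
  · have hstar : star (signVector s ε j) = (√(d - 1))⁻¹ • ε j • (1 : ℂ) := by
      rcases Int.units_eq_one_or (ε j) with hε | hε <;> simp [signVector, hj, hε]
    rw [hstar, smul_assoc, smul_assoc, one_smul, Function.update_of_ne hj]

lemma expect_Xst_pow_le (hK : ∑ i, (K i)ᴴ * K i = 1)
    {W : (Fin d → ℤˣ) → unitaryGroup (Fin d) ℂ}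
    (hWs : ∀ ε j, (W ε).1 j s = EuclideanSpace.single s (1 : ℂ) j)
    (hWt : ∀ ε j, (W ε).1 j t = signVector s ε j) (m : ℕ) :
    𝔼 ε, Xst K s t (W ε) ^ m ≤ (2 * m - 1)‼ / (d - 1 : ℝ) ^ m := by
  have hd1 : (0 : ℝ) ≤ d - 1 := sub_nonneg.2 (by exact_mod_cast s.pos)
  set c := Function.update (krausAmplitude K s) s 0
  have hX (ε : Fin d → ℤˣ) :
      Xst K s t (W ε) ^ m = ‖rademacherSum c ε‖ ^ (2 * m) / (d - 1 : ℝ) ^ m := by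
    rw [Xst_eq_norm_krausAmplitude_sq,
      krausAmplitude_conjKraus_of_col_eq_signVector (hWs ε) (hWt ε), norm_smul, mul_pow,
      norm_inv, inv_pow, Real.norm_of_nonneg (Real.sqrt_nonneg _), Real.sq_sqrt hd1, mul_pow,
      inv_pow, ← pow_mul, inv_mul_eq_div]
  have hc : ∑ j, ‖c j‖ ^ 2 ≤ 1 := by
    rw [← sum_norm_krausAmplitude_sq hK s]
    refine Finset.sum_le_sum fun j _ ↦ ?_
    by_cases hj : j = s
    · subst hj
      simp [c]
    · simp [c, hj]
  simp only [hX, ← Finset.expect_div]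
  gcongr
  calc 𝔼 ε, ‖rademacherSum c ε‖ ^ (2 * m) ≤ (2 * m - 1)‼ * (∑ j, ‖c j‖ ^ 2) ^ m :=
        expect_norm_rademacherSum_pow_le c m
    _ ≤ (2 * m - 1)‼ :=
        mul_le_of_le_one_right (Nat.cast_nonneg _) (pow_le_one₀ (by positivity) hc)

lemma integral_Xst_pow_le (μ : Measure (unitaryGroup (Fin d) ℂ)) [IsProbabilityMeasure μ]
    [μ.IsMulLeftInvariant] (hK : ∑ i, (K i)ᴴ * K i = 1) (hst : s ≠ t) (m : ℕ) :
    ∫ U, Xst K s t U ^ m ∂μ ≤ (2 * m - 1)‼ / (d - 1 : ℝ) ^ m := by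
  have := isMulRightInvariant_of_isMulLeftInvariant μ
  choose W hWs hWt using exists_unitaryGroup_col_signVector hst
  have hint : Integrable (fun U ↦ Xst K s t U ^ m) μ :=
    integrable_pow_of_mem_Icc_zero_one (continuous_Xst K s t).aemeasurable
      (ae_of_all _ (Xst_mem_Icc hK s t)) m
  refine integral_le_of_expect_mul_right_le hint W fun U ↦ ?_
  have hUW (ε : Fin d → ℤˣ) : Xst K s t (U * W ε) = Xst (conjKraus U K) s t (W ε) := by
    simp only [Xst_eq_norm_krausAmplitude_sq, conjKraus_mul]
  simp only [hUW]
  exact expect_Xst_pow_le (sum_conjTranspose_mul_self_conjKraus hK U) hWs hWt m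

end Symmetrization

section Deviation

open scoped Nat

variable {d r : ℕ} {K : Fin r → Matrix (Fin d) (Fin d) ℂ}

lemma doubleFactorial_div_sub_one_pow_le (m : ℕ) {x : ℝ} (hx : 2 ≤ x) :
    (2 * m - 1)‼ / (x - 1) ^ m ≤ 2 * (m * (x + m) / x ^ 2) ^ m := by
  have hx1 : 0 < x - 1 := by linarith
  calc (2 * m - 1)‼ / (x - 1) ^ m ≤ (m : ℝ) ^ m / (x - 1) ^ m := by
        gcongr
        exact_mod_cast doubleFactorial_two_mul_sub_one_le_pow m
    _ = (m / (x - 1)) ^ m := (div_pow ..).symm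
    _ ≤ 2 * (m * (x + m) / x ^ 2) ^ m := by
        obtain rfl | rfl | hm : m = 0 ∨ m = 1 ∨ 2 ≤ m := by lia
        · simp
        · rw [pow_one, pow_one, ← mul_div_assoc, div_le_div_iff₀ hx1 (by positivity)]
          push_cast
          nlinarith
        · have hm2 : (2 : ℝ) ≤ m := by exact_mod_cast hm
          have hbase : m / (x - 1) ≤ m * (x + m) / x ^ 2 := by
            rw [div_le_div_iff₀ hx1 (by positivity), mul_assoc]
            gcongr
            nlinarith
          calc (m / (x - 1)) ^ m ≤ (m * (x + m) / x ^ 2) ^ m := by gcongr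
            _ ≤ 2 * (m * (x + m) / x ^ 2) ^ m :=
              le_mul_of_one_le_left (by positivity) one_le_two

lemma one_le_card_kraus (hK : ∑ i, (K i)ᴴ * K i = 1) (s : Fin d) : 1 ≤ r := by
  refine Nat.one_le_iff_ne_zero.2 ?_
  rintro rfl
  simpa using congrFun (congrFun hK s) s

theorem deviation_bound_offdiag_general {m : ℕ} (hm : 0 < m) {θ : ℝ} (hθ : 0 ≤ θ)
    (μ : Measure (unitaryGroup (Fin d) ℂ)) [IsProbabilityMeasure μ] [μ.IsMulLeftInvariant]
    (hK : ∑ i, (K i)ᴴ * K i = 1) {s t : Fin d} (hst : s ≠ t) (ε : ℝ) :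
    μ {U | ε ≤ Xst K s t U} ≤
      ENNReal.ofReal (3 * Real.exp (-θ * ε) *
        (Real.exp (θ * m * (d + m) / d ^ 2) + Real.exp θ * (m * (d + m) / d ^ 2) ^ m)) := by
  have hd : (2 : ℝ) ≤ d := by exact_mod_cast Fin.nontrivial_iff_two_le.1 ⟨s, t, hst⟩
  have hmoment := (integral_Xst_pow_le μ hK hst m).trans (doubleFactorial_div_sub_one_pow_le m hd)
  have htail := measureReal_ge_le_of_integral_pow_le (continuous_Xst K s t).aemeasurable
    (ae_of_all μ (Xst_mem_Icc hK s t)) (by positivity) hθ hmoment ε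
  rw [← ofReal_measureReal]
  refine ENNReal.ofReal_le_ofReal (htail.trans_eq ?_)
  ring_nf

end Deviation

/-- Deviation bound, off-diagonal case. -/
theorem deviation_bound_offdiag :
    ∃ C : ℝ, 0 < C ∧
      ∀ (θ θ₀ d r : ℕ), 0 < θ → 0 < θ₀ → (θ₀ : ℝ) ≤ Real.sqrt d →
        Real.sqrt 6 * ((2 * θ₀ : ℕ) : ℝ) ^ ((7 : ℝ) / 4) < (d : ℝ) →
        ∀ (μ : Measure (Matrix.unitaryGroup (Fin d) ℂ)),
          IsProbabilityMeasure μ → μ.IsMulLeftInvariant →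
          ∀ (K : Fin r → Matrix (Fin d) (Fin d) ℂ),
            (∑ i, (K i)ᴴ * K i = 1) →
            ∀ (s t : Fin d), s ≠ t →
              ∀ ε : ℝ, 0 < ε →
                μ {U | ε ≤ Xst K s t U} ≤
                  ENNReal.ofReal (C * Real.exp (-(θ : ℝ) * ε) *
                    (Real.exp ((r : ℝ) * θ * θ₀ * ((d : ℝ) + θ₀) / (d : ℝ) ^ 2) +
                      Real.exp θ * ((r : ℝ) * θ₀ * ((d : ℝ) + θ₀) / (d : ℝ) ^ 2) ^ (θ₀ : ℕ))) := by
  refine ⟨3, by norm_num, fun θ θ₀ d r _ hθ₀ _ _ μ _ _ K hK s t hst ε _ ↦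
    (deviation_bound_offdiag_general hθ₀ θ.cast_nonneg μ hK hst ε).trans ?_⟩
  have hr : (1 : ℝ) ≤ r := by exact_mod_cast one_le_card_kraus hK s
  gcongr <;> exact le_mul_of_one_le_left (Nat.cast_nonneg _) hr

end
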